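/- Fix integers 1 ≤ k ≤ n and write n = k·a + b with a ≥ 0 and 0 ≤ b ≤ k−1. Then the number of k-vacillating parking functions of length n is |VPF_n(k)| = ( n! / Π_{t=0}^{k-1} ⌊(n+t)/k⌋! ) · |VPF_{a+1}|^b · |VPF_a|^{k−b}, where |VPF_0| := 1 and VPF_m (m ≥ 1) denotes the set of 1-vacillating parking functions of length m. -/

import Mathlib

/-- One car with (1-indexed) preference `p` attempts to park on a one-way street with
spots `1,…,n` under the `k`-vacillating rule, given the set `occ` of occupied spots:
it parks in spot `p` if unoccupied; otherwise in spot `p - k` if `p - k ≥ 1` and it is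
unoccupied; otherwise in spot `p + k` if `p + k ≤ n` and it is unoccupied; otherwise it
fails to park (`none`). -/
def parkStep (n k : ℕ) (occ : Finset ℕ) (p : ℕ) : Option ℕ :=
  if p ∉ occ then some p
  else if k < p ∧ p - k ∉ occ then some (p - k)
  else if p + k ≤ n ∧ p + k ∉ occ then some (p + k)
  else none

/-- Park the cars whose preference list is given, in order, under the `k`-vacillating
rule on a street with spots `1,…,n`, starting from occupied set `occ`.  Returns the list
of spots occupied by the cars (in the order the cars arrive), or `none` if some car
fails to park. -/
def parkAssign (n k : ℕ) (occ : Finset ℕ) : List ℕ → Option (List ℕ)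
  | [] => some []
  | p :: ps =>
    match parkStep n k occ p with
    | none => none
    | some s => (parkAssign n k (insert s occ) ps).map (s :: ·)

/-- The 1-indexed preference list in `[n]^m` associated to `α : Fin m → Fin n`
(car `i+1` prefers spot `α i + 1`). -/
def prefList {m n : ℕ} (α : Fin m → Fin n) : List ℕ :=
  List.ofFn fun i => (α i : ℕ) + 1

/-- The set of `k`-vacillating parking functions of length `n`:
preference lists in `[n]^n` (encoded as `Fin n → Fin n`) for which all `n` cars park. -/
def VPFk (n k : ℕ) : Finset (Fin n → Fin n) :=
  Finset.univ.filter fun α => (parkAssign n k ∅ (prefList α)).isSome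

/-- The set of vacillating parking functions of length `n` (the case `k = 1`). -/
def VPF (n : ℕ) : Finset (Fin n → Fin n) := VPFk n 1

/-- The number of preference words of length `m` over `[n]` for which all cars park, starting
from the occupied set `occ`. -/
def parkCount (n k : ℕ) (occ : Finset ℕ) : ℕ → ℕ
  | 0 => 1
  | m + 1 => ∑ i ∈ Finset.range n,
      (parkStep n k occ (i + 1)).elim 0 fun s => parkCount n k (insert s occ) m

/-- The `j`-th spot (counting from `1`) of the residue class of `c + 1` modulo `k`. -/
def classSpot (k c j : ℕ) : ℕ := c + (j - 1) * k + 1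

/-- The number of spots among `1,…,n` in the residue class of `c + 1` modulo `k`. -/
def classLength (n k c : ℕ) : ℕ := (n + (k - 1 - c)) / k

theorem card_filter_isSome_parkAssign (n k m : ℕ) (occ : Finset ℕ) :
    (Finset.univ.filter fun α : Fin m → Fin n =>
      (parkAssign n k occ (prefList α)).isSome).card = parkCount n k occ m := by
  induction m generalizing occ with
  | zero => simp [prefList, parkAssign, parkCount]
  | succ m ih =>
    rw [Finset.card_filter, ← (Fin.consEquiv fun _ => Fin n).sum_comp,
      Fintype.sum_prod_type, parkCount, Finset.sum_range]
    refine Finset.sum_congr rfl fun i _ => ?_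
    cases h : parkStep n k occ (i + 1) with
    | none => simp [Fin.consEquiv, prefList, parkAssign, h]
    | some s =>
      rw [Option.elim_some, ← ih, Finset.card_filter]
      refine Finset.sum_congr rfl fun α _ => if_congr ?_ rfl rfl
      simp [Fin.consEquiv, prefList, parkAssign, h]

theorem card_VPFk (n k : ℕ) : (VPFk n k).card = parkCount n k ∅ n :=
  card_filter_isSome_parkAssign n k n ∅

theorem lt_classLength_iff {n k c j : ℕ} (hc : c < k) :
    j < classLength n k c ↔ c + j * k < n := by
  rw [classLength, ← Nat.succ_le_iff, Nat.le_div_iff_mul_le (by omega), Nat.succ_mul]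
  omega

theorem sum_range_eq_sum_classes (n : ℕ) {k : ℕ} (hk : 0 < k) (f : ℕ → ℕ) :
    ∑ i ∈ Finset.range n, f i =
      ∑ c ∈ Finset.range k, ∑ j ∈ Finset.range (classLength n k c), f (c + j * k) := by
  rw [Finset.sum_sigma']
  refine Finset.sum_bij' (fun i _ => ⟨i % k, i / k⟩) (fun x _ => x.1 + x.2 * k) ?_ ?_ ?_ ?_ ?_
  · intro i hi
    have h := Nat.mod_lt i hk
    simp only [Finset.mem_sigma, Finset.mem_range] at hi ⊢
    exact ⟨h, (lt_classLength_iff h).2 (by rwa [Nat.mod_add_div'])⟩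
  · rintro ⟨c, j⟩ hx
    simp only [Finset.mem_sigma, Finset.mem_range] at hx ⊢
    exact (lt_classLength_iff hx.1).1 hx.2
  · intro i _
    exact Nat.mod_add_div' i k
  · rintro ⟨c, j⟩ hx
    simp only [Finset.mem_sigma, Finset.mem_range] at hx
    simp [Nat.add_mul_div_right _ _ hk, Nat.div_eq_of_lt hx.1, Nat.mod_eq_of_lt hx.1]
  · intro i _
    simp only [Nat.mod_add_div']

theorem sum_classLength (n : ℕ) {k : ℕ} (hk : 0 < k) :
    ∑ c ∈ Finset.range k, classLength n k c = n := by
  simpa using (sum_range_eq_sum_classes n hk fun _ => 1).symm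

theorem classSpot_inj {k c d i j : ℕ} (hc : c < k) (hd : d < k) (hi : 1 ≤ i) (hj : 1 ≤ j) :
    classSpot k c i = classSpot k d j ↔ c = d ∧ i = j := by
  refine ⟨fun h => ?_, by rintro ⟨rfl, rfl⟩; rfl⟩
  obtain ⟨i, rfl⟩ := Nat.exists_eq_add_of_le' hi
  obtain ⟨j, rfl⟩ := Nat.exists_eq_add_of_le' hj
  have h' : c + i * k = d + j * k := by simpa [classSpot] using h
  have hmod := congrArg (· % k) h'
  have hdiv := congrArg (· / k) h'
  have hk : 0 < k := by omega
  simp only [Nat.add_mul_mod_self_right, Nat.mod_eq_of_lt hc, Nat.mod_eq_of_lt hd] at hmod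
  simp only [Nat.add_mul_div_right _ _ hk, Nat.div_eq_of_lt hc, Nat.div_eq_of_lt hd] at hdiv
  omega

/-- The rule with step `k` on `[n]` acts on each residue class as the rule with step `1`. -/
theorem parkStep_classSpot {n k c j : ℕ} {occ S : Finset ℕ} (hc : c < k)
    (hocc : ∀ i ∈ Finset.Icc 1 (classLength n k c), classSpot k c i ∈ occ ↔ i ∈ S)
    (hj : j ∈ Finset.Icc 1 (classLength n k c)) :
    parkStep n k occ (classSpot k c j) =
      (parkStep (classLength n k c) 1 S j).map (classSpot k c) := by
  have h0 := hocc j hj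
  rw [Finset.mem_Icc] at hj
  have hlt : k < classSpot k c j ↔ 1 < j := by
    obtain ⟨i, rfl⟩ := Nat.exists_eq_add_of_le' hj.1
    rcases i with _ | i
    · simp [classSpot]; omega
    · simp [classSpot, Nat.succ_mul]; omega
  have hpred (h : 1 < j) : classSpot k c j - k = classSpot k c (j - 1) := by
    obtain ⟨i, rfl⟩ := Nat.exists_eq_add_of_le' h
    simp [classSpot, Nat.succ_mul]; omega
  have hsucc : classSpot k c j + k = classSpot k c (j + 1) := by
    obtain ⟨i, rfl⟩ := Nat.exists_eq_add_of_le' hj.1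
    simp [classSpot, Nat.succ_mul]; omega
  have hle : classSpot k c (j + 1) ≤ n ↔ j + 1 ≤ classLength n k c := by
    rw [Nat.succ_le_iff, lt_classLength_iff hc]
    simp [classSpot]
  have h1 : (k < classSpot k c j ∧ classSpot k c j - k ∉ occ) ↔ (1 < j ∧ j - 1 ∉ S) := by
    rw [hlt]
    refine and_congr_right fun h => ?_
    rw [hpred h, hocc _ (Finset.mem_Icc.2 (by omega))]
  have h2 : (classSpot k c j + k ≤ n ∧ classSpot k c j + k ∉ occ) ↔
      (j + 1 ≤ classLength n k c ∧ j + 1 ∉ S) := by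
    rw [hsucc, hle]
    refine and_congr_right fun h => ?_
    rw [hocc _ (Finset.mem_Icc.2 (by omega))]
  unfold parkStep
  simp only [h0, h1, h2]
  split_ifs with _ h _
  · simp [hpred h.1]
  · simp [hsucc]
  · rfl
  · rfl

theorem mem_of_parkStep_eq_some {n k p s : ℕ} {occ : Finset ℕ} (hp : p ∈ Finset.Icc 1 n)
    (h : parkStep n k occ p = some s) : s ∈ Finset.Icc 1 n ∧ s ∉ occ := by
  rw [Finset.mem_Icc] at *
  unfold parkStep at h
  split_ifs at h with h1 h2 h3 <;> obtain rfl := Option.some.inj h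
  · exact ⟨by omega, h2.2⟩
  · exact ⟨by omega, h3.2⟩
  · exact ⟨hp, h1⟩

/-- The count decouples over residue classes: the words of the classes are shuffled freely. -/
theorem parkCount_mul_prod_factorial {n k : ℕ} (hk : 0 < k) (R : ℕ) (occ : Finset ℕ)
    (S : ℕ → Finset ℕ) (r : ℕ → ℕ)
    (hS : ∀ c < k, S c ⊆ Finset.Icc 1 (classLength n k c))
    (hr : ∀ c < k, r c + (S c).card = classLength n k c)
    (hocc : ∀ c < k, ∀ j ∈ Finset.Icc 1 (classLength n k c), classSpot k c j ∈ occ ↔ j ∈ S c)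
    (hR : ∑ c ∈ Finset.range k, r c = R) :
    parkCount n k occ R * ∏ c ∈ Finset.range k, (r c).factorial =
      R.factorial * ∏ c ∈ Finset.range k, parkCount (classLength n k c) 1 (S c) (r c) := by
  induction R generalizing occ S r with
  | zero =>
    have h0 : ∀ c ∈ Finset.range k, r c = 0 := Finset.sum_eq_zero_iff.1 hR
    rw [Finset.prod_eq_one fun c hc => by rw [h0 c hc, Nat.factorial_zero],
      Finset.prod_eq_one fun c hc => by rw [h0 c hc, parkCount]]
    rfl
  | succ R ih =>
    rw [parkCount, sum_range_eq_sum_classes n hk, Finset.sum_mul, Nat.factorial_succ, ← hR,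
      Finset.sum_mul, Finset.sum_mul]
    refine Finset.sum_congr rfl fun c hc => ?_
    have hck := Finset.mem_range.1 hc
    have hstep (j : ℕ) (hj : j ∈ Finset.range (classLength n k c)) :
        parkStep n k occ (c + j * k + 1) =
          (parkStep (classLength n k c) 1 (S c) (j + 1)).map (classSpot k c) :=
      parkStep_classSpot hck (hocc c hck)
        (Finset.mem_Icc.2 ⟨by omega, Finset.mem_range.1 hj⟩)
    rw [Finset.sum_congr rfl fun j hj => by rw [hstep j hj]]
    have hspot (j : ℕ) (hj : j ∈ Finset.range (classLength n k c)) (s : ℕ)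
        (h : parkStep (classLength n k c) 1 (S c) (j + 1) = some s) :=
      mem_of_parkStep_eq_some (Finset.mem_Icc.2 ⟨by omega, Finset.mem_range.1 hj⟩) h
    rcases hq : r c with _ | q
    · have hfull : S c = Finset.Icc 1 (classLength n k c) := by
        refine Finset.eq_of_subset_of_card_le (hS c hck) ?_
        have := hr c hck
        simp; omega
      rw [Finset.sum_eq_zero, zero_mul, zero_mul, zero_mul]
      intro j hj
      cases h : parkStep (classLength n k c) 1 (S c) (j + 1) with
      | none => rfl
      | some s =>
        have := hspot j hj s h
        rw [hfull] at this
        exact absurd this.1 this.2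
    · rw [← Finset.mul_prod_erase _ _ hc, ← Finset.mul_prod_erase _ _ hc, hq, parkCount,
        Nat.factorial_succ]
      suffices h : ∀ j ∈ Finset.range (classLength n k c),
          ((parkStep (classLength n k c) 1 (S c) (j + 1)).map (classSpot k c)).elim 0
              (fun s => parkCount n k (insert s occ) R) *
            (q.factorial * ∏ d ∈ (Finset.range k).erase c, (r d).factorial) =
          R.factorial * ((parkStep (classLength n k c) 1 (S c) (j + 1)).elim 0
              (fun s => parkCount (classLength n k c) 1 (insert s (S c)) q) *
            ∏ d ∈ (Finset.range k).erase c, parkCount (classLength n k d) 1 (S d) (r d)) by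
        have := Finset.sum_congr rfl h
        rw [← Finset.sum_mul, ← Finset.mul_sum, ← Finset.sum_mul] at this
        linear_combination (q + 1) * this
      intro j hj
      cases h : parkStep (classLength n k c) 1 (S c) (j + 1) with
      | none => simp
      | some s =>
        obtain ⟨hsI, hsS⟩ := hspot j hj s h
        have hne {d : ℕ} (hd : d ∈ (Finset.range k).erase c) : d ≠ c := Finset.ne_of_mem_erase hd
        have key := ih (insert (classSpot k c s) occ) (Function.update S c (insert s (S c)))
          (Function.update r c q) ?_ ?_ ?_ ?_
        · have hfact : ∏ d ∈ (Finset.range k).erase c, (Function.update r c q d).factorial =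
              ∏ d ∈ (Finset.range k).erase c, (r d).factorial :=
            Finset.prod_congr rfl fun d hd => by rw [Function.update_of_ne (hne hd)]
          have hcount : ∏ d ∈ (Finset.range k).erase c, parkCount (classLength n k d) 1
                (Function.update S c (insert s (S c)) d) (Function.update r c q d) =
              ∏ d ∈ (Finset.range k).erase c, parkCount (classLength n k d) 1 (S d) (r d) :=
            Finset.prod_congr rfl fun d hd => by
              rw [Function.update_of_ne (hne hd), Function.update_of_ne (hne hd)]
          rw [← Finset.mul_prod_erase _ _ hc, ← Finset.mul_prod_erase _ _ hc, hfact, hcount,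
            Function.update_self, Function.update_self] at key
          simpa using key
        · intro d hd
          rcases eq_or_ne d c with rfl | hdc
          · rw [Function.update_self]
            exact Finset.insert_subset hsI (hS d hd)
          · rw [Function.update_of_ne hdc]
            exact hS d hd
        · intro d hd
          have := hr d hd
          rcases eq_or_ne d c with rfl | hdc
          · rw [Function.update_self, Function.update_self, Finset.card_insert_of_notMem hsS]
            omega
          · rwa [Function.update_of_ne hdc, Function.update_of_ne hdc]
        · intro d hd i hi
          rw [Finset.mem_insert, hocc d hd i hi,
            classSpot_inj hd hck (Finset.mem_Icc.1 hi).1 (Finset.mem_Icc.1 hsI).1]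
          rcases eq_or_ne d c with rfl | hdc
          · simp
          · simp [hdc]
        · have hsum : ∑ d ∈ (Finset.range k).erase c, Function.update r c q d =
              ∑ d ∈ (Finset.range k).erase c, r d :=
            Finset.sum_congr rfl fun d hd => by rw [Function.update_of_ne (hne hd)]
          rw [← Finset.add_sum_erase _ _ hc] at hR ⊢
          rw [hsum, Function.update_self]
          omega

theorem classLength_mul_add {k a b c : ℕ} (hb : b < k) (hc : c < k) :
    classLength (k * a + b) k c = if c < b then a + 1 else a := by
  have hk : 0 < k := by omega
  rw [classLength, Nat.add_assoc, Nat.mul_add_div hk]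
  split_ifs with h
  · rw [Nat.div_eq_of_lt_le (by omega : 1 * k ≤ _) (by omega)]
  · rw [Nat.div_eq_of_lt (by omega), add_zero]

theorem prod_classLength {k a b : ℕ} (hb : b < k) (f : ℕ → ℕ) :
    ∏ c ∈ Finset.range k, f (classLength (k * a + b) k c) = f (a + 1) ^ b * f a ^ (k - b) := by
  rw [← Finset.prod_range_mul_prod_Ico _ hb.le]
  congr 1
  · rw [Finset.prod_congr rfl fun c hc => by
      rw [classLength_mul_add hb ((Finset.mem_range.1 hc).trans hb),
        if_pos (Finset.mem_range.1 hc)]]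
    simp
  · rw [Finset.prod_congr rfl fun c hc => by
      rw [classLength_mul_add hb (Finset.mem_Ico.1 hc).2,
        if_neg (Finset.mem_Ico.1 hc).1.not_gt]]
    simp

/-- For `1 ≤ k ≤ n` with `n = k·a + b`, `0 ≤ b ≤ k − 1`,
`|VPF_n(k)| = (n! / ∏_{t=0}^{k-1} ⌊(n+t)/k⌋!) · |VPF_{a+1}|^b · |VPF_a|^{k−b}`
(the division is exact, so natural-number division computes it). -/
theorem vpfk_card_eq (k n a b : ℕ) (hk : 1 ≤ k) (hkn : k ≤ n)
    (hn : n = k * a + b) (hb : b ≤ k - 1) :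
    (VPFk n k).card =
      (Nat.factorial n / ∏ t ∈ Finset.range k, Nat.factorial ((n + t) / k)) *
        (VPF (a + 1)).card ^ b * (VPF a).card ^ (k - b) := by
  have hbk : b < k := by omega
  have hdvd : ∏ c ∈ Finset.range k, (classLength n k c).factorial ∣ n.factorial := by
    simpa only [sum_classLength n hk] using
      Nat.prod_factorial_dvd_factorial_sum (Finset.range k) (classLength n k)
  have hpos : 0 < ∏ c ∈ Finset.range k, (classLength n k c).factorial :=
    Finset.prod_pos fun c _ => Nat.factorial_pos _
  have key := parkCount_mul_prod_factorial (n := n) hk n ∅ (fun _ => ∅) (classLength n k)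
    (by simp) (by simp) (by simp) (sum_classLength n hk)
  have hVPF : ∏ c ∈ Finset.range k, parkCount (classLength n k c) 1 ∅ (classLength n k c) =
      (VPF (a + 1)).card ^ b * (VPF a).card ^ (k - b) := by
    rw [VPF, VPF, card_VPFk, card_VPFk, hn]
    exact prod_classLength hbk fun L => parkCount L 1 ∅ L
  have hreflect : ∏ t ∈ Finset.range k, ((n + t) / k).factorial =
      ∏ c ∈ Finset.range k, (classLength n k c).factorial :=
    (Finset.prod_range_reflect (fun t => ((n + t) / k).factorial) k).symm
  rw [hVPF] at key
  rw [hreflect, mul_assoc, card_VPFk, Nat.div_mul_right_comm hdvd]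
  exact Nat.eq_div_of_mul_eq_left hpos.ne' key
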